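/- Random perturbations — almost sure convergence: In the same setting as the preceding random-perturbation theorem (leafless tree T with tight transition families q, q' having uniformly summable local entropies; random transitions p(y|x)(ω) = (1 − δ_{|x|}(ω))·q(y|x) + δ_{|x|}(ω)·q'(y|x) with measurable δ_n : Ω → [0,1]; length function ℓ with c₁ ≤ ℓ ≤ c₂; H_q(x)/ℓ(x) → h finite as |x| → ∞; D_{q',q}(x) < D < ∞ for all x), if δ_n → 0 almost surely as n → ∞, then almost surely H(P_n)/ℓ(P_n) → h as n → ∞; that is, for Pr-almost every ω, the entropy rate of the perturbed process equals h. -/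

import Mathlib

/-!
Mixing `q` with `q'` in proportion `d` moves the local entropy by at most `d |H_{q'} - H_q|` plus
the binary entropy of `d`: concavity of `φ` gives the lower bound, its subadditivity and
`φ(st) = t φ(s) + s φ(t)` the upper one. Tightness bounds `H_q` and `H_{q'}` uniformly, so
wherever `δ_n → 0` the perturbed local entropies still satisfy `H_p(x)/ℓ(x) → h`.

By the chain rule, `H(P_n)` and `ℓ(P_n)` are the sums over the levels `i < n` of the means of `H_p`
and of `ℓ` under `P_i`. The ratio of these means is a weighted average of `H_p/ℓ` over level `i`,
so it tends to `h`, and the Stolz–Cesàro theorem passes the limit to `H(P_n)/ℓ(P_n)`.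
-/

open scoped BigOperators
open Filter

noncomputable section

/-- The entropy function `φ(t) = t·log₂(1/t)` (which vanishes at `t = 0`). -/
def phi (t : ℝ) : ℝ := t * Real.logb 2 (1 / t)

/-- A rooted tree: a set of finite lists over ℕ containing the empty list (the root)
and closed under taking prefixes. -/
def IsTree (T : Set (List ℕ)) : Prop :=
  ([] : List ℕ) ∈ T ∧ ∀ x ∈ T, ∀ y : List ℕ, y <+: x → y ∈ T

/-- The successors of `x` in `T`: one-entry extensions of `x` lying in `T`. -/
def succs (T : Set (List ℕ)) (x : List ℕ) : Set (List ℕ) :=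
  {y | y ∈ T ∧ ∃ n : ℕ, y = x ++ [n]}

/-- `x` is a leaf of `T`. -/
def IsLeaf (T : Set (List ℕ)) (x : List ℕ) : Prop :=
  x ∈ T ∧ succs T x = ∅

/-- The boundary of `T`: its set of leaves. -/
def bdry (T : Set (List ℕ)) : Set (List ℕ) := {x | IsLeaf T x}

/-- The interior of `T`. -/
def intr (T : Set (List ℕ)) : Set (List ℕ) := T \ bdry T

/-- No vertex has exactly one successor. -/
def NoUnary (T : Set (List ℕ)) : Prop :=
  ∀ x ∈ T, ∀ y : List ℕ, succs T x ≠ {y}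

/-- `T` has no infinite geodesic. -/
def NoInfGeo (T : Set (List ℕ)) : Prop :=
  ¬ ∃ ξ : ℕ → ℕ, ∀ n : ℕ, (List.ofFn fun i : Fin n => ξ i) ∈ T

/-- `∂T_x`: the set of leaves having `x` as a prefix. -/
def cone (T : Set (List ℕ)) (x : List ℕ) : Set (List ℕ) :=
  {v | v ∈ bdry T ∧ x <+: v}

/-- `P(∂T_x)`. -/
def mass (T : Set (List ℕ)) (P : List ℕ → ℝ) (x : List ℕ) : ℝ :=
  ∑' v : cone T x, P v

/-- `|x|_ℓ`: the sum of `ℓ(y)` over the proper prefixes `y` of `x`. -/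
def lenWt (ℓ : List ℕ → ℝ) (x : List ℕ) : ℝ :=
  ∑ i ∈ Finset.range x.length, ℓ (x.take i)

/-- Expected length `ℓ(P)`. -/
def expLen (T : Set (List ℕ)) (ℓ P : List ℕ → ℝ) : ℝ :=
  ∑' v : bdry T, lenWt ℓ v * P v

/-- Forward transition probability `p(y|x) = P(∂T_y)/P(∂T_x)`. -/
def fwd (T : Set (List ℕ)) (P : List ℕ → ℝ) (x y : List ℕ) : ℝ :=
  mass T P y / mass T P x

/-- Node-average measure `μ_P(x) = ℓ(x)·P(∂T_x)/ℓ(P)`. -/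
def nodeAvg (T : Set (List ℕ)) (ℓ P : List ℕ → ℝ) (x : List ℕ) : ℝ :=
  ℓ x * mass T P x / expLen T ℓ P

/-- A (fully supported) probability measure on a set `S` of vertices. -/
def IsProbOn (S : Set (List ℕ)) (P : List ℕ → ℝ) : Prop :=
  (∀ v ∈ S, 0 < P v) ∧ HasSum (fun v : S => P v) 1

/-- A tight family of forward transition probabilities with uniformly summable entropies:
for every `ε > 0` there is `M` such that every `x ∈ T` admits `N_ε(x) ⊆ N(x)` with
`|N_ε(x)| ≤ M`, `∑_{y∈N(x)∖N_ε(x)} q(y|x) < ε` and `∑_{y∈N(x)∖N_ε(x)} φ(q(y|x)) < ε`. -/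
def TightFam (T : Set (List ℕ)) (q : List ℕ → List ℕ → ℝ) : Prop :=
  ∀ ε : ℝ, 0 < ε → ∃ M : ℕ, ∀ x ∈ T,
    ∃ F : Finset (List ℕ), ↑F ⊆ succs T x ∧ F.card ≤ M ∧
      (∑' y : {y : List ℕ // y ∈ succs T x ∧ y ∉ F}, q x y) < ε ∧
      (Summable fun y : {y : List ℕ // y ∈ succs T x ∧ y ∉ F} => phi (q x y)) ∧
      (∑' y : {y : List ℕ // y ∈ succs T x ∧ y ∉ F}, phi (q x y)) < ε

/-- The random perturbation `p(y|x)(ω) = (1 − δ_{|x|}(ω))·q(y|x) + δ_{|x|}(ω)·q'(y|x)`. -/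
def perturb {Ω : Type*} (q q' : List ℕ → List ℕ → ℝ) (δn : ℕ → Ω → ℝ)
    (x y : List ℕ) (ω : Ω) : ℝ :=
  (1 - δn x.length ω) * q x y + δn x.length ω * q' x y

/-- The (random) flow obtained by multiplying the transition probabilities `p` along the
prefix chain from the root to `x`. -/
def flowOf {Ω : Type*} (p : List ℕ → List ℕ → Ω → ℝ) (x : List ℕ) (ω : Ω) : ℝ :=
  ∏ i ∈ Finset.range x.length, p (x.take i) (x.take (i + 1)) ω

/-- The `n`-th level `S(n) = {x ∈ T : |x| = n}` of a leafless tree. -/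
def levn (T : Set (List ℕ)) (n : ℕ) : Set (List ℕ) :=
  {x | x ∈ T ∧ x.length = n}

section Phi

lemma phi_eq_negMulLog_div (t : ℝ) : phi t = Real.negMulLog t / Real.log 2 := by
  simp only [phi, Real.negMulLog, Real.logb, one_div, Real.log_inv]
  ring

lemma continuous_phi : Continuous phi := by
  simpa only [funext phi_eq_negMulLog_div] using Real.continuous_negMulLog.div_const (Real.log 2)

lemma phi_zero : phi 0 = 0 := by simp [phi]

lemma phi_one : phi 1 = 0 := by simp [phi]

lemma phi_nonneg {t : ℝ} (h0 : 0 ≤ t) (h1 : t ≤ 1) : 0 ≤ phi t := by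
  rw [phi_eq_negMulLog_div]
  exact div_nonneg (Real.negMulLog_nonneg h0 h1) (Real.log_pos one_lt_two).le

lemma phi_mul (s t : ℝ) : phi (s * t) = t * phi s + s * phi t := by
  simp only [phi_eq_negMulLog_div, Real.negMulLog_mul]
  ring

lemma phi_le_two {t : ℝ} (h0 : 0 ≤ t) : phi t ≤ 2 := by
  rw [phi_eq_negMulLog_div, div_le_iff₀ (Real.log_pos one_lt_two)]
  linarith [Real.negMulLog_le_one_sub_self h0, Real.log_two_gt_d9]

lemma concaveOn_phi : ConcaveOn ℝ (Set.Ici 0) phi := by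
  have hlog : 0 ≤ (Real.log 2)⁻¹ := inv_nonneg.2 (Real.log_pos one_lt_two).le
  have hphi : phi = fun t => (Real.log 2)⁻¹ • Real.negMulLog t :=
    funext fun t => (phi_eq_negMulLog_div t).trans (div_eq_inv_mul _ _)
  rw [hphi]
  exact Real.concaveOn_negMulLog.smul hlog

lemma phi_add_le {s t : ℝ} (hs : 0 ≤ s) (ht : 0 ≤ t) : phi (s + t) ≤ phi s + phi t := by
  rcases hs.eq_or_lt with rfl | hs
  · simp [phi_zero]
  rcases ht.eq_or_lt with rfl | ht
  · simp [phi_zero]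
  have hs' : Real.logb 2 (1 / (s + t)) ≤ Real.logb 2 (1 / s) :=
    Real.logb_le_logb_of_le one_lt_two (by positivity)
      (one_div_le_one_div_of_le hs (le_add_of_nonneg_right ht.le))
  have ht' : Real.logb 2 (1 / (s + t)) ≤ Real.logb 2 (1 / t) :=
    Real.logb_le_logb_of_le one_lt_two (by positivity)
      (one_div_le_one_div_of_le ht (le_add_of_nonneg_left hs.le))
  calc phi (s + t) = s * Real.logb 2 (1 / (s + t)) + t * Real.logb 2 (1 / (s + t)) := add_mul ..
    _ ≤ phi s + phi t :=
      add_le_add (mul_le_mul_of_nonneg_left hs' hs.le) (mul_le_mul_of_nonneg_left ht' ht.le)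

lemma phi_mix_le {s t d : ℝ} (hs : 0 ≤ s) (ht : 0 ≤ t) (hd : d ∈ Set.Icc (0 : ℝ) 1) :
    phi ((1 - d) * s + d * t) ≤
      (s * phi (1 - d) + (1 - d) * phi s) + (t * phi d + d * phi t) := by
  rw [← phi_mul, ← phi_mul]
  exact phi_add_le (mul_nonneg (sub_nonneg.2 hd.2) hs) (mul_nonneg hd.1 ht)

end Phi

section Entropy

variable {ι : Type*} {a b : ι → ℝ} {d : ℝ}

/-- The (base 2) entropy of a family of weights; the value is `0` when the series of the
`phi (a i)` diverges. -/
def entropy (a : ι → ℝ) : ℝ := ∑' i, phi (a i)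

/-- A probability vector on a possibly infinite index type. -/
structure IsProbVector (a : ι → ℝ) : Prop where
  nonneg : ∀ i, 0 ≤ a i
  hasSum : HasSum a 1

namespace IsProbVector

lemma le_one (ha : IsProbVector a) (i : ι) : a i ≤ 1 :=
  le_hasSum ha.hasSum i fun j _ => ha.nonneg j

lemma phi_nonneg (ha : IsProbVector a) (i : ι) : 0 ≤ phi (a i) :=
  _root_.phi_nonneg (ha.nonneg i) (ha.le_one i)

lemma entropy_nonneg (ha : IsProbVector a) : 0 ≤ entropy a :=
  tsum_nonneg ha.phi_nonneg

lemma summable_mul_of_abs_le (ha : IsProbVector a) {f : ι → ℝ} {C : ℝ} (hf : ∀ i, |f i| ≤ C) :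
    Summable fun i => f i * a i := by
  refine Summable.of_norm_bounded (ha.hasSum.summable.mul_left C) fun i => ?_
  rw [norm_mul, Real.norm_of_nonneg (ha.nonneg i)]
  exact mul_le_mul_of_nonneg_right (hf i) (ha.nonneg i)

lemma mix (ha : IsProbVector a) (hb : IsProbVector b) (hd : d ∈ Set.Icc (0 : ℝ) 1) :
    IsProbVector fun i => (1 - d) * a i + d * b i where
  nonneg i := add_nonneg (mul_nonneg (sub_nonneg.2 hd.2) (ha.nonneg i))
    (mul_nonneg hd.1 (hb.nonneg i))
  hasSum := by
    simpa only [mul_one, sub_add_cancel] using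
      (ha.hasSum.mul_left (1 - d)).add (hb.hasSum.mul_left d)

lemma hasSum_phi_mix_majorant (ha : IsProbVector a) (hb : IsProbVector b)
    (hsa : Summable fun i => phi (a i)) (hsb : Summable fun i => phi (b i)) :
    HasSum (fun i => (a i * phi (1 - d) + (1 - d) * phi (a i)) + (b i * phi d + d * phi (b i)))
      ((1 * phi (1 - d) + (1 - d) * entropy a) + (1 * phi d + d * entropy b)) :=
  ((ha.hasSum.mul_right _).add (hsa.hasSum.mul_left _)).add
    ((hb.hasSum.mul_right _).add (hsb.hasSum.mul_left _))

lemma summable_phi_mix (ha : IsProbVector a) (hb : IsProbVector b) (hd : d ∈ Set.Icc (0 : ℝ) 1)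
    (hsa : Summable fun i => phi (a i)) (hsb : Summable fun i => phi (b i)) :
    Summable fun i => phi ((1 - d) * a i + d * b i) :=
  .of_nonneg_of_le (ha.mix hb hd).phi_nonneg (fun i => phi_mix_le (ha.nonneg i) (hb.nonneg i) hd)
    (ha.hasSum_phi_mix_majorant hb hsa hsb).summable

lemma entropy_mix_le (ha : IsProbVector a) (hb : IsProbVector b) (hd : d ∈ Set.Icc (0 : ℝ) 1)
    (hsa : Summable fun i => phi (a i)) (hsb : Summable fun i => phi (b i)) :
    entropy (fun i => (1 - d) * a i + d * b i) ≤
      (1 - d) * entropy a + d * entropy b + (phi d + phi (1 - d)) := by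
  have hle := hasSum_le (fun i => phi_mix_le (ha.nonneg i) (hb.nonneg i) hd)
    (ha.summable_phi_mix hb hd hsa hsb).hasSum
    (ha.hasSum_phi_mix_majorant hb hsa hsb)
  simp only [entropy] at hle ⊢
  linarith

lemma le_entropy_mix (ha : IsProbVector a) (hb : IsProbVector b) (hd : d ∈ Set.Icc (0 : ℝ) 1)
    (hsa : Summable fun i => phi (a i)) (hsb : Summable fun i => phi (b i)) :
    (1 - d) * entropy a + d * entropy b ≤ entropy fun i => (1 - d) * a i + d * b i :=
  hasSum_le
    (fun i => concaveOn_phi.2 (ha.nonneg i) (hb.nonneg i) (sub_nonneg.2 hd.2) hd.1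
      (sub_add_cancel 1 d))
    ((hsa.hasSum.mul_left (1 - d)).add (hsb.hasSum.mul_left d))
    (ha.summable_phi_mix hb hd hsa hsb).hasSum

lemma abs_entropy_mix_sub_le (ha : IsProbVector a) (hb : IsProbVector b)
    (hd : d ∈ Set.Icc (0 : ℝ) 1)
    (hsa : Summable fun i => phi (a i)) (hsb : Summable fun i => phi (b i)) :
    |entropy (fun i => (1 - d) * a i + d * b i) - entropy a| ≤
      d * |entropy b - entropy a| + (phi d + phi (1 - d)) := by
  have hupper := ha.entropy_mix_le hb hd hsa hsb
  have hlower := ha.le_entropy_mix hb hd hsa hsb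
  have hpos := mul_le_mul_of_nonneg_left (le_abs_self (entropy b - entropy a)) hd.1
  have hneg := mul_le_mul_of_nonneg_left (neg_abs_le (entropy b - entropy a)) hd.1
  exact abs_le.2 ⟨by linarith, by linarith⟩

end IsProbVector

end Entropy

section Averages

lemma abs_tsum_div_tsum_sub_le {ι : Type*} {u v : ι → ℝ} {L ε : ℝ} (hu : Summable u)
    (hv : Summable v) (hpos : 0 < ∑' i, v i) (huv : ∀ i, |u i - L * v i| ≤ ε * v i) :
    |(∑' i, u i) / (∑' i, v i) - L| ≤ ε := by
  have hle : |∑' i, (u i - L * v i)| ≤ ε * ∑' i, v i :=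
    tsum_of_norm_bounded (f := fun i => u i - L * v i) (hv.hasSum.mul_left ε) huv
  rw [hu.tsum_sub (hv.mul_left L), tsum_mul_left] at hle
  rwa [div_sub' hpos.ne', mul_comm (∑' i, v i) L, abs_div, abs_of_pos hpos, div_le_iff₀ hpos]

lemma tendsto_sum_range_div_sum_range {u v : ℕ → ℝ} {L : ℝ} (hv : ∀ n, 0 < v n)
    (hdiv : Tendsto (fun n => ∑ i ∈ Finset.range n, v i) atTop atTop)
    (hL : Tendsto (fun n => u n / v n) atTop (nhds L)) :
    Tendsto (fun n => (∑ i ∈ Finset.range n, u i) / ∑ i ∈ Finset.range n, v i) atTop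
      (nhds L) := by
  have hsmall : (fun n => u n - L * v n) =o[atTop] v := by
    rw [Asymptotics.isLittleO_iff_tendsto fun n hn => absurd hn (hv n).ne']
    simpa only [sub_div, mul_div_cancel_right₀ _ (hv _).ne'] using
      tendsto_sub_nhds_zero_iff.2 hL
  have hratio := (hsmall.sum_range (fun n => (hv n).le) hdiv).tendsto_div_nhds_zero
  rw [← tendsto_sub_nhds_zero_iff]
  refine hratio.congr' ?_
  filter_upwards [hdiv.eventually_gt_atTop 0] with n hn
  rw [Finset.sum_sub_distrib, ← Finset.mul_sum, sub_div, mul_div_cancel_right₀ _ hn.ne']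

end Averages

section Tree

variable {T : Set (List ℕ)} {ℓ : List ℕ → ℝ}

/-- The filter of vertices of `T` going to infinity, i.e. "as `|x| → ∞`" with `x ∈ T`. -/
def treeAtTop (T : Set (List ℕ)) : Filter (List ℕ) := comap List.length atTop ⊓ 𝓟 T

lemma eventually_treeAtTop {P : List ℕ → Prop} :
    (∀ᶠ x in treeAtTop T, P x) ↔ ∃ k : ℕ, ∀ x ∈ T, k ≤ x.length → P x := by
  rw [treeAtTop, ((atTop_basis.comap _).inf_principal T).eventually_iff]
  simp only [true_and, Set.mem_inter_iff, Set.mem_preimage, Set.mem_Ici]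
  exact exists_congr fun k => forall_congr' fun x =>
    ⟨fun hP hx hk => hP ⟨hk, hx⟩, fun hP hx => hP hx.2 hx.1⟩

lemma tendsto_length_treeAtTop : Tendsto List.length (treeAtTop T) atTop :=
  tendsto_comap.mono_left inf_le_left

lemma IsTree.take_mem (hT : IsTree T) {x : List ℕ} (hx : x ∈ T) (i : ℕ) : x.take i ∈ T :=
  hT.2 x hx _ (List.take_prefix i x)

lemma IsTree.take_succ_mem_succs (hT : IsTree T) {x : List ℕ} (hx : x ∈ T) {i : ℕ}
    (hi : i < x.length) : x.take (i + 1) ∈ succs T (x.take i) :=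
  ⟨hT.take_mem hx _, x[i], (List.take_append_getElem hi).symm⟩

lemma mem_levn_succ {n : ℕ} {x y : List ℕ} (hx : x ∈ levn T n) (hy : y ∈ succs T x) :
    y ∈ levn T (n + 1) := by
  obtain ⟨hyT, m, rfl⟩ := hy
  exact ⟨hyT, by rw [List.length_append, List.length_singleton, hx.2]⟩

/-- The vertices of level `n + 1`, grouped by their predecessors; this reduces sums over a level
to sums over the preceding one. -/
def sigmaSuccsEquivLevn (hT : IsTree T) (n : ℕ) :
    (Σ x : levn T n, succs T (x : List ℕ)) ≃ levn T (n + 1) :=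
  Equiv.ofBijective (fun z => ⟨z.2, mem_levn_succ z.1.2 z.2.2⟩) <| by
    constructor
    · rintro ⟨⟨x, hx⟩, _, hy, m, rfl⟩ ⟨⟨x', hx'⟩, _, hy', m', rfl⟩ hxy
      obtain ⟨rfl, -⟩ := List.append_inj' (Subtype.mk.inj hxy) rfl
      obtain rfl : m = m' := by simpa using hxy
      rfl
    · rintro ⟨y, hy, hlen⟩
      obtain rfl | ⟨x, m, rfl⟩ := y.eq_nil_or_concat'
      · simp at hlen
      · exact ⟨⟨⟨x, hT.2 _ hy x (List.prefix_append x [m]), by simpa using hlen⟩,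
          ⟨x ++ [m], hy, m, rfl⟩⟩, rfl⟩

lemma hasSum_levn_zero (hT : IsTree T) (f : List ℕ → ℝ) :
    HasSum (fun x : levn T 0 => f x) (f []) :=
  hasSum_single (⟨[], hT.1, rfl⟩ : levn T 0) fun x hx =>
    absurd (Subtype.ext (List.length_eq_zero_iff.1 x.2.2)) hx

lemma hasSum_levn_succ (hT : IsTree T) {n : ℕ} {f g : List ℕ → ℝ} {s : ℝ}
    (hf : ∀ y ∈ T, 0 ≤ f y)
    (hfg : ∀ x ∈ T, HasSum (fun y : succs T x => f y) (g x))
    (hg : HasSum (fun x : levn T n => g x) s) :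
    HasSum (fun y : levn T (n + 1) => f y) s := by
  rw [← (sigmaSuccsEquivLevn hT n).hasSum_iff]
  refine HasSum.sigma_of_hasSum hg (fun x => hfg x x.2.1) ?_
  refine (summable_sigma_of_nonneg fun z => hf _ z.2.2.1).2
    ⟨fun x => (hfg x x.2.1).summable, ?_⟩
  exact hg.summable.congr fun x => (hfg x x.2.1).tsum_eq.symm

lemma hasSum_levn_of_hasSum_succs (hT : IsTree T) {f g : List ℕ → ℝ} (hf : ∀ x ∈ T, 0 ≤ f x)
    (hfg : ∀ x ∈ T, HasSum (fun y : succs T x => f y) (f x + g x))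
    (hg : ∀ n, Summable fun x : levn T n => g x) (n : ℕ) :
    HasSum (fun x : levn T n => f x)
      (f [] + ∑ i ∈ Finset.range n, ∑' x : levn T i, g x) := by
  induction n with
  | zero => simpa using hasSum_levn_zero hT f
  | succ n ih =>
    rw [Finset.sum_range_succ, ← add_assoc]
    exact hasSum_levn_succ hT hf hfg (ih.add (hg n).hasSum)

lemma lenWt_of_mem_succs {x y : List ℕ} (hy : y ∈ succs T x) :
    lenWt ℓ y = lenWt ℓ x + ℓ x := by
  obtain ⟨-, m, rfl⟩ := hy
  rw [lenWt, List.length_append, List.length_singleton, Finset.sum_range_succ,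
    List.take_left, lenWt]
  congr 1
  refine Finset.sum_congr rfl fun i hi => ?_
  rw [List.take_append_of_le_length (Finset.mem_range.1 hi).le]

lemma lenWt_nonneg (hT : IsTree T) (hℓ : ∀ x ∈ T, 0 ≤ ℓ x) {x : List ℕ} (hx : x ∈ T) :
    0 ≤ lenWt ℓ x :=
  Finset.sum_nonneg fun i _ => hℓ _ (hT.take_mem hx i)

end Tree

section Transition

variable {T : Set (List ℕ)}

/-- Forward transition probabilities on `T`: a probability vector on the successors of each
vertex. -/
def IsTransition (T : Set (List ℕ)) (p : List ℕ → List ℕ → ℝ) : Prop :=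
  ∀ x ∈ T, IsProbVector fun y : succs T x => p x y

/-- The local entropy `H_p(x)` of the transition probabilities at the vertex `x`. -/
def vertexEntropy (T : Set (List ℕ)) (p : List ℕ → List ℕ → ℝ) (x : List ℕ) : ℝ :=
  entropy fun y : succs T x => p x y

/-- The local entropies converge and are bounded above, uniformly in the vertex. Convergence has
to be asked for, as `vertexEntropy` is `0` at a vertex where the series diverges. -/
def HasBoundedEntropy (T : Set (List ℕ)) (p : List ℕ → List ℕ → ℝ) : Prop :=
  ∃ C : ℝ, ∀ x ∈ T, (Summable fun y : succs T x => phi (p x y)) ∧ vertexEntropy T p x ≤ C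

lemma TightFam.hasBoundedEntropy {q : List ℕ → List ℕ → ℝ} (ht : TightFam T q)
    (hq : ∀ x ∈ T, ∀ y ∈ succs T x, 0 ≤ q x y) : HasBoundedEntropy T q := by
  obtain ⟨M, hM⟩ := ht 1 one_pos
  refine ⟨M * 2 + 1, fun x hx => ?_⟩
  obtain ⟨F, hF, hcard, -, hsum, htail⟩ := hM x hx
  have hsplit : HasSum (fun y : succs T x => phi (q x y))
      (∑ y ∈ F, phi (q x y) +
        ∑' y : {y : List ℕ // y ∈ succs T x ∧ y ∉ F}, phi (q x y)) := by
    have hunion := (F.hasSum fun y => phi (q x y)).add_disjoint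
      (t := succs T x \ F) Set.disjoint_sdiff_right hsum.hasSum
    rwa [Set.union_sdiff_cancel hF] at hunion
  refine ⟨hsplit.summable, ?_⟩
  calc vertexEntropy T q x
      = ∑ y ∈ F, phi (q x y) +
        ∑' y : {y : List ℕ // y ∈ succs T x ∧ y ∉ F}, phi (q x y) := hsplit.tsum_eq
    _ ≤ F.card * 2 + 1 := by
      refine add_le_add ?_ htail.le
      rw [← nsmul_eq_mul]
      exact Finset.sum_le_card_nsmul _ _ _ fun y hy => phi_le_two (hq x hx y (hF hy))
    _ ≤ M * 2 + 1 := by gcongr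

end Transition

section Flow

variable {Ω : Type*} {ω : Ω} {T : Set (List ℕ)} {p : List ℕ → List ℕ → Ω → ℝ}

lemma flowOf_nil : flowOf p [] ω = 1 := by simp [flowOf]

lemma flowOf_of_mem_succs {x y : List ℕ} (hy : y ∈ succs T x) :
    flowOf p y ω = flowOf p x ω * p x y ω := by
  obtain ⟨-, m, rfl⟩ := hy
  rw [flowOf, List.length_append, List.length_singleton, Finset.prod_range_succ,
    List.take_left, List.take_of_length_le (by simp), flowOf]
  congr 1
  refine Finset.prod_congr rfl fun i hi => ?_
  rw [List.take_append_of_le_length (Finset.mem_range.1 hi).le,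
    List.take_append_of_le_length (Finset.mem_range.1 hi)]

/-- The mean of `f` over the `n`-th level, weighted by the flow of `p` at `ω`; for `f = lenWt ℓ`
it is `ℓ(P_n)`. -/
def levelMean (T : Set (List ℕ)) (p : List ℕ → List ℕ → Ω → ℝ) (ω : Ω) (n : ℕ)
    (f : List ℕ → ℝ) : ℝ :=
  ∑' x : levn T n, f x * flowOf p x ω

/-- The entropy `H(P_n)` of the flow of `p` at `ω` on the `n`-th level. -/
def levelEntropy (T : Set (List ℕ)) (p : List ℕ → List ℕ → Ω → ℝ) (ω : Ω) (n : ℕ) : ℝ :=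
  entropy fun x : levn T n => flowOf p x ω

lemma IsTransition.flowOf_nonneg (hp : IsTransition T (p · · ω)) (hT : IsTree T) {x : List ℕ}
    (hx : x ∈ T) : 0 ≤ flowOf p x ω :=
  Finset.prod_nonneg fun i hi => (hp _ (hT.take_mem hx i)).nonneg
    ⟨_, hT.take_succ_mem_succs hx (Finset.mem_range.1 hi)⟩

lemma IsTransition.flowOf_le_one (hp : IsTransition T (p · · ω)) (hT : IsTree T) {x : List ℕ}
    (hx : x ∈ T) : flowOf p x ω ≤ 1 :=
  Finset.prod_le_one
    (fun i hi => (hp _ (hT.take_mem hx i)).nonneg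
      ⟨_, hT.take_succ_mem_succs hx (Finset.mem_range.1 hi)⟩)
    (fun i hi => (hp _ (hT.take_mem hx i)).le_one
      ⟨_, hT.take_succ_mem_succs hx (Finset.mem_range.1 hi)⟩)

lemma IsTransition.isProbVector_flowOf (hp : IsTransition T (p · · ω)) (hT : IsTree T) (n : ℕ) :
    IsProbVector fun x : levn T n => flowOf p x ω where
  nonneg x := hp.flowOf_nonneg hT x.2.1
  hasSum := by
    have hstep : ∀ x ∈ T, HasSum (fun y : succs T x => flowOf p y ω) (flowOf p x ω + 0) :=
      fun x hx => by
        simpa only [flowOf_of_mem_succs (Subtype.prop _), mul_one, add_zero] using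
          (hp x hx).hasSum.mul_left (flowOf p x ω)
    simpa only [flowOf_nil, tsum_zero, Finset.sum_const_zero, add_zero] using
      hasSum_levn_of_hasSum_succs hT (fun x hx => hp.flowOf_nonneg hT hx) hstep
        (fun _ => summable_zero) n

lemma IsTransition.levelEntropy_eq_sum_levelMean (hp : IsTransition T (p · · ω))
    (hT : IsTree T) (hsum : ∀ x ∈ T, Summable fun y : succs T x => phi (p x y ω))
    (hmean : ∀ n, Summable fun x : levn T n => vertexEntropy T (p · · ω) x * flowOf p x ω)
    (n : ℕ) :
    levelEntropy T p ω n =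
      ∑ i ∈ Finset.range n, levelMean T p ω i (vertexEntropy T (p · · ω)) := by
  have hstep : ∀ x ∈ T, HasSum (fun y : succs T x => phi (flowOf p y ω))
      (phi (flowOf p x ω) + vertexEntropy T (p · · ω) x * flowOf p x ω) := fun x hx => by
    simpa only [flowOf_of_mem_succs (Subtype.prop _), phi_mul, one_mul, vertexEntropy, entropy,
      mul_comm (flowOf p x ω) (phi _)] using
      ((hp x hx).hasSum.mul_right (phi (flowOf p x ω))).add
        ((hsum x hx).hasSum.mul_right (flowOf p x ω))
  have hlevel := hasSum_levn_of_hasSum_succs hT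
    (fun x hx => phi_nonneg (hp.flowOf_nonneg hT hx) (hp.flowOf_le_one hT hx)) hstep hmean n
  rw [flowOf_nil, phi_one, zero_add] at hlevel
  exact hlevel.tsum_eq

lemma IsTransition.levelMean_lenWt_eq_sum_levelMean (hp : IsTransition T (p · · ω))
    (hT : IsTree T) {ℓ : List ℕ → ℝ} (hℓ : ∀ x ∈ T, 0 ≤ ℓ x)
    (hmean : ∀ n, Summable fun x : levn T n => ℓ x * flowOf p x ω) (n : ℕ) :
    levelMean T p ω n (lenWt ℓ) = ∑ i ∈ Finset.range n, levelMean T p ω i ℓ := by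
  have hstep : ∀ x ∈ T, HasSum (fun y : succs T x => lenWt ℓ y * flowOf p y ω)
      (lenWt ℓ x * flowOf p x ω + ℓ x * flowOf p x ω) := fun x hx => by
    simpa only [flowOf_of_mem_succs (Subtype.prop _), lenWt_of_mem_succs (Subtype.prop _),
      mul_one, mul_assoc, add_mul] using
      (hp x hx).hasSum.mul_left ((lenWt ℓ x + ℓ x) * flowOf p x ω)
  have hlevel := hasSum_levn_of_hasSum_succs hT
    (fun x hx => mul_nonneg (lenWt_nonneg hT hℓ hx) (hp.flowOf_nonneg hT hx)) hstep hmean n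
  have hroot : lenWt ℓ [] = 0 := by simp [lenWt]
  rw [hroot, zero_mul, zero_add] at hlevel
  exact hlevel.tsum_eq

lemma IsTransition.le_levelMean (hp : IsTransition T (p · · ω)) (hT : IsTree T) {f : List ℕ → ℝ}
    {c : ℝ} {n : ℕ} (hf : ∀ x ∈ T, c ≤ f x)
    (hmean : Summable fun x : levn T n => f x * flowOf p x ω) : c ≤ levelMean T p ω n f := by
  have hle := hasSum_le
    (fun x : levn T n => mul_le_mul_of_nonneg_right (hf x x.2.1) (hp.flowOf_nonneg hT x.2.1))
    ((hp.isProbVector_flowOf hT n).hasSum.mul_left c) hmean.hasSum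
  rwa [mul_one] at hle

lemma IsTransition.tendsto_levelMean_div_levelMean (hp : IsTransition T (p · · ω))
    (hT : IsTree T) {f g : List ℕ → ℝ} {L : ℝ} (hg : ∀ x ∈ T, 0 < g x)
    (hfmean : ∀ n, Summable fun x : levn T n => f x * flowOf p x ω)
    (hgmean : ∀ n, Summable fun x : levn T n => g x * flowOf p x ω)
    (hpos : ∀ n, 0 < levelMean T p ω n g)
    (hL : Tendsto (fun x => f x / g x) (treeAtTop T) (nhds L)) :
    Tendsto (fun n => levelMean T p ω n f / levelMean T p ω n g) atTop (nhds L) := by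
  refine Metric.nhds_basis_closedBall.tendsto_right_iff.2 fun ε hε => ?_
  obtain ⟨k, hk⟩ := eventually_treeAtTop.1 (hL (Metric.closedBall_mem_nhds L hε))
  filter_upwards [eventually_ge_atTop k] with n hn
  refine abs_tsum_div_tsum_sub_le (hfmean n) (hgmean n) (hpos n) fun x => ?_
  have hgx := hg x x.2.1
  have hratio : |f x / g x - L| ≤ ε := hk x x.2.1 (hn.trans_eq x.2.2.symm)
  have hflow := hp.flowOf_nonneg hT x.2.1
  calc |f x * flowOf p x ω - L * (g x * flowOf p x ω)|
      = |(f x / g x - L) * (g x * flowOf p x ω)| := by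
        congr 1
        field_simp
    _ = |f x / g x - L| * (g x * flowOf p x ω) := by
        rw [abs_mul, abs_of_nonneg (mul_nonneg hgx.le hflow)]
    _ ≤ ε * (g x * flowOf p x ω) := by gcongr

theorem IsTransition.tendsto_levelEntropy_div_levelMean_lenWt (hp : IsTransition T (p · · ω))
    (hT : IsTree T) (hbdd : HasBoundedEntropy T (p · · ω)) {ℓ : List ℕ → ℝ} {c₁ c₂ h : ℝ}
    (hc₁ : 0 < c₁) (hℓ : ∀ x ∈ T, c₁ ≤ ℓ x ∧ ℓ x ≤ c₂)
    (hh : Tendsto (fun x => vertexEntropy T (p · · ω) x / ℓ x) (treeAtTop T) (nhds h)) :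
    Tendsto (fun n => levelEntropy T p ω n / levelMean T p ω n (lenWt ℓ)) atTop (nhds h) := by
  obtain ⟨C, hC⟩ := hbdd
  have hℓpos : ∀ x ∈ T, 0 < ℓ x := fun x hx => hc₁.trans_le (hℓ x hx).1
  have hHmean : ∀ n, Summable fun x : levn T n =>
      vertexEntropy T (p · · ω) x * flowOf p x ω := fun n =>
    (hp.isProbVector_flowOf hT n).summable_mul_of_abs_le (C := C) fun x =>
      (abs_of_nonneg (hp x x.2.1).entropy_nonneg).trans_le (hC x x.2.1).2
  have hℓmean : ∀ n, Summable fun x : levn T n => ℓ x * flowOf p x ω := fun n =>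
    (hp.isProbVector_flowOf hT n).summable_mul_of_abs_le (C := c₂) fun x =>
      (abs_of_pos (hℓpos x x.2.1)).trans_le (hℓ x x.2.1).2
  have hge : ∀ n, c₁ ≤ levelMean T p ω n ℓ := fun n =>
    hp.le_levelMean hT (fun x hx => (hℓ x hx).1) (hℓmean n)
  have hpos : ∀ n, 0 < levelMean T p ω n ℓ := fun n => hc₁.trans_le (hge n)
  have hdiv : Tendsto (fun n => ∑ i ∈ Finset.range n, levelMean T p ω i ℓ) atTop atTop := by
    refine tendsto_atTop_mono (fun n => ?_) (tendsto_natCast_atTop_atTop.atTop_mul_const hc₁)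
    simpa using Finset.card_nsmul_le_sum (Finset.range n) _ _ fun i _ => hge i
  simp only [hp.levelEntropy_eq_sum_levelMean hT (fun x hx => (hC x hx).1) hHmean,
    hp.levelMean_lenWt_eq_sum_levelMean hT (fun x hx => (hℓpos x hx).le) hℓmean]
  exact tendsto_sum_range_div_sum_range hpos hdiv
    (hp.tendsto_levelMean_div_levelMean hT hℓpos hHmean hℓmean hpos hh)

end Flow

section Perturbation

variable {Ω : Type*} {ω : Ω} {T : Set (List ℕ)} {q q' : List ℕ → List ℕ → ℝ}
  {δn : ℕ → Ω → ℝ}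

lemma IsTransition.perturb (hq : IsTransition T q) (hq' : IsTransition T q')
    (hδ01 : ∀ n, δn n ω ∈ Set.Icc (0 : ℝ) 1) : IsTransition T (perturb q q' δn · · ω) :=
  fun x hx => (hq x hx).mix (hq' x hx) (hδ01 x.length)

lemma HasBoundedEntropy.perturb (hb : HasBoundedEntropy T q) (hb' : HasBoundedEntropy T q')
    (hq : IsTransition T q) (hq' : IsTransition T q')
    (hδ01 : ∀ n, δn n ω ∈ Set.Icc (0 : ℝ) 1) : HasBoundedEntropy T (perturb q q' δn · · ω) := by
  obtain ⟨C, hC⟩ := hb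
  obtain ⟨C', hC'⟩ := hb'
  refine ⟨C + C' + (2 + 2), fun x hx => ?_⟩
  obtain ⟨hs, hHC⟩ := hC x hx
  obtain ⟨hs', hHC'⟩ := hC' x hx
  have hδ := hδ01 x.length
  have hδ' : 0 ≤ 1 - δn x.length ω := sub_nonneg.2 hδ.2
  refine ⟨(hq x hx).summable_phi_mix (hq' x hx) hδ hs hs',
    ((hq x hx).entropy_mix_le (hq' x hx) hδ hs hs').trans ?_⟩
  gcongr
  · exact (mul_le_of_le_one_left (hq x hx).entropy_nonneg (sub_le_self 1 hδ.1)).trans hHC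
  · exact (mul_le_of_le_one_left (hq' x hx).entropy_nonneg hδ.2).trans hHC'
  · exact phi_le_two hδ.1
  · exact phi_le_two hδ'

lemma tendsto_vertexEntropy_perturb_sub (hq : IsTransition T q) (hq' : IsTransition T q')
    (hb : HasBoundedEntropy T q) (hb' : HasBoundedEntropy T q')
    (hδ01 : ∀ n, δn n ω ∈ Set.Icc (0 : ℝ) 1)
    (hδ : Tendsto (δn · ω) atTop (nhds 0)) :
    Tendsto (fun x => vertexEntropy T (perturb q q' δn · · ω) x - vertexEntropy T q x)
      (treeAtTop T) (nhds 0) := by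
  obtain ⟨C, hC⟩ := hb
  obtain ⟨C', hC'⟩ := hb'
  let e : ℝ → ℝ := fun d => d * max C' C + (phi d + phi (1 - d))
  have he : Tendsto e (nhds 0) (nhds 0) := by
    have hcont : Continuous e := (continuous_id.mul continuous_const).add
      (continuous_phi.add (continuous_phi.comp (continuous_const.sub continuous_id)))
    have he0 : e 0 = 0 := by simp [e, phi_zero, phi_one]
    simpa only [he0] using hcont.tendsto 0
  refine squeeze_zero_norm' (eventually_treeAtTop.2 ⟨0, fun x hx _ => ?_⟩)
    ((he.comp hδ).comp tendsto_length_treeAtTop)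
  refine ((hq x hx).abs_entropy_mix_sub_le (hq' x hx) (hδ01 x.length) (hC x hx).1
    (hC' x hx).1).trans (add_le_add_left (mul_le_mul_of_nonneg_left ?_ (hδ01 x.length).1) _)
  exact abs_sub_le_iff.2
    ⟨(sub_le_self _ (hq x hx).entropy_nonneg).trans ((hC' x hx).2.trans (le_max_left _ _)),
      (sub_le_self _ (hq' x hx).entropy_nonneg).trans ((hC x hx).2.trans (le_max_right _ _))⟩

lemma tendsto_vertexEntropy_perturb_div (hq : IsTransition T q) (hq' : IsTransition T q')
    (hb : HasBoundedEntropy T q) (hb' : HasBoundedEntropy T q')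
    (hδ01 : ∀ n, δn n ω ∈ Set.Icc (0 : ℝ) 1) (hδ : Tendsto (δn · ω) atTop (nhds 0))
    {ℓ : List ℕ → ℝ} {c h : ℝ} (hc : 0 < c) (hℓ : ∀ x ∈ T, c ≤ ℓ x)
    (hh : Tendsto (fun x => vertexEntropy T q x / ℓ x) (treeAtTop T) (nhds h)) :
    Tendsto (fun x => vertexEntropy T (perturb q q' δn · · ω) x / ℓ x) (treeAtTop T)
      (nhds h) := by
  have hdiff := tendsto_vertexEntropy_perturb_sub hq hq' hb hb' hδ01 hδ
  have hdiffdiv : Tendsto (fun x =>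
      (vertexEntropy T (perturb q q' δn · · ω) x - vertexEntropy T q x) / ℓ x)
      (treeAtTop T) (nhds 0) := by
    refine squeeze_zero_norm' (eventually_treeAtTop.2 ⟨0, fun x hx _ => ?_⟩)
      (by simpa only [norm_zero, zero_div] using hdiff.norm.div_const c)
    rw [norm_div, Real.norm_of_nonneg (hc.le.trans (hℓ x hx))]
    exact div_le_div_of_nonneg_left (norm_nonneg _) hc (hℓ x hx)
  simpa only [zero_add, ← add_div, sub_add_cancel] using hdiffdiv.add hh

end Perturbation

open MeasureTheory in
theorem random_perturbation_almost_surely_general {Ω : Type*} [MeasurableSpace Ω]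
    (Pr : Measure Ω) {T : Set (List ℕ)} (hT : IsTree T) {q q' : List ℕ → List ℕ → ℝ}
    (hq : IsTransition T q) (hq' : IsTransition T q')
    (hb : HasBoundedEntropy T q) (hb' : HasBoundedEntropy T q')
    {δn : ℕ → Ω → ℝ} (hδ01 : ∀ n ω, δn n ω ∈ Set.Icc (0 : ℝ) 1)
    {ℓ : List ℕ → ℝ} {c₁ c₂ h : ℝ} (hc₁ : 0 < c₁) (hℓ : ∀ x ∈ T, c₁ ≤ ℓ x ∧ ℓ x ≤ c₂)
    (hh : Tendsto (fun x => vertexEntropy T q x / ℓ x) (treeAtTop T) (nhds h))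
    (has : ∀ᵐ ω ∂Pr, Tendsto (fun n => δn n ω) atTop (nhds 0)) :
    ∀ᵐ ω ∂Pr, Tendsto (fun n =>
      levelEntropy T (perturb q q' δn) ω n / levelMean T (perturb q q' δn) ω n (lenWt ℓ))
      atTop (nhds h) := by
  filter_upwards [has] with ω hω
  exact (hq.perturb hq' (hδ01 · ω)).tendsto_levelEntropy_div_levelMean_lenWt hT
    (hb.perturb hb' hq hq' (hδ01 · ω)) hc₁ hℓ
    (tendsto_vertexEntropy_perturb_div hq hq' hb hb' (hδ01 · ω) hω hc₁
      (fun x hx => (hℓ x hx).1) hh)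

open MeasureTheory in
/-- Random perturbations, almost sure convergence: if `δ_n → 0` almost surely, then
almost surely `H(P_n)/ℓ(P_n) → h`. -/
theorem random_perturbation_almost_surely
    {Ω : Type*} [MeasurableSpace Ω] (Pr : Measure Ω) [IsProbabilityMeasure Pr]
    (T : Set (List ℕ)) (hT : IsTree T)
    (hbranch : ∀ x ∈ T, ∃ y ∈ succs T x, ∃ z ∈ succs T x, y ≠ z)
    (q q' : List ℕ → List ℕ → ℝ)
    (hq0 : ∀ x ∈ T, ∀ y ∈ succs T x, 0 ≤ q x y)
    (hq1 : ∀ x ∈ T, HasSum (fun y : succs T x => q x y) 1)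
    (hq'0 : ∀ x ∈ T, ∀ y ∈ succs T x, 0 ≤ q' x y)
    (hq'1 : ∀ x ∈ T, HasSum (fun y : succs T x => q' x y) 1)
    (htq : TightFam T q) (htq' : TightFam T q')
    (δn : ℕ → Ω → ℝ) (hmeas : ∀ n : ℕ, Measurable (δn n))
    (hδ01 : ∀ n ω, δn n ω ∈ Set.Icc (0:ℝ) 1)
    (ℓ : List ℕ → ℝ) (c₁ c₂ : ℝ) (hc₁ : 0 < c₁) (hc₁₂ : c₁ ≤ c₂)
    (hℓ : ∀ x ∈ T, c₁ ≤ ℓ x ∧ ℓ x ≤ c₂)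
    (h : ℝ)
    (hh : ∀ ε : ℝ, 0 < ε → ∃ k : ℕ, ∀ x ∈ T, k ≤ x.length →
      |(∑' y : succs T x, phi (q x y)) / ℓ x - h| < ε)
    (D : ℝ)
    (hD : ∀ x ∈ T,
      (Summable fun y : succs T x => |q' x y * Real.logb 2 (q' x y / q x y)|) ∧
      (∑' y : succs T x, q' x y * Real.logb 2 (q' x y / q x y)) < D)
    (has : ∀ᵐ ω ∂Pr, Tendsto (fun n : ℕ => δn n ω) atTop (nhds 0)) :
    ∀ᵐ ω ∂Pr, Tendsto (fun n : ℕ =>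
        (∑' x : levn T n, phi (flowOf (perturb q q' δn) x ω))
          / (∑' x : levn T n, lenWt ℓ x * flowOf (perturb q q' δn) x ω))
      atTop (nhds h) :=
  random_perturbation_almost_surely_general Pr hT
    (fun x hx => ⟨fun y => hq0 x hx y y.2, hq1 x hx⟩)
    (fun x hx => ⟨fun y => hq'0 x hx y y.2, hq'1 x hx⟩)
    (htq.hasBoundedEntropy hq0) (htq'.hasBoundedEntropy hq'0) hδ01 hc₁ hℓ
    (Metric.tendsto_nhds.2 fun ε hε => eventually_treeAtTop.2 (hh ε hε)) has
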